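/- arXiv:1505.02490 — 2 statements merged into one kernel-verified Lean document; each statement's English description precedes it below -/
import Mathlib

section
/- Let α ∈ (0,1) and τ ∈ (-1,0). If C(τ) = 0, then τ = α - 1; that is, α - 1 is the unique zero of C in the interval (-1,0). -/
open MeasureTheory Set

noncomputable def FF (α τ t : ℝ) : ℝ := t ^ (-1 - 2*α) *
      ((Ioo (0:ℝ) 1).indicator (fun s => (1 - s) ^ τ) t + (1 + t) ^ τ - 2)

lemma FF_meas (α τ : ℝ) : Measurable (FF α τ) := by
  unfold FF
  refine Measurable.mul (by fun_prop) ?_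
  refine Measurable.sub (Measurable.add ?_ (by fun_prop)) measurable_const
  exact Measurable.indicator (by fun_prop) measurableSet_Ioo

lemma wt {a θ τ : ℝ} (ha : 0 < a) (h0 : 0 ≤ θ) (h1 : θ ≤ 1) :
    a ^ (θ * τ) ≤ θ * a ^ τ + (1 - θ) := by
  have := Real.geom_mean_le_arith_mean2_weighted h0 (sub_nonneg.2 h1)
    (Real.rpow_nonneg ha.le τ) zero_le_one (by ring)
  rw [← Real.rpow_mul ha.le, Real.one_rpow, mul_comm τ θ] at this
  linarith

lemma phi_small {τ t : ℝ} (hτ : -1 < τ) (hτ0 : τ ≤ 0) (ht : 0 < t) (ht' : t ≤ 1/2) :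
    |(1 - t) ^ τ + (1 + t) ^ τ - 2| ≤ 4 * t ^ 2 := by
  have p1 : (0:ℝ) < 1 - t := by linarith
  have p2 : (0:ℝ) < 1 + t := by linarith
  have h1 := wt (τ := -1) p1 (θ := -τ) (by linarith) (by linarith)
  have h2 := wt (τ := -1) p2 (θ := -τ) (by linarith) (by linarith)
  rw [show -τ * -1 = τ by ring, Real.rpow_neg_one] at h1 h2
  have hprod : 1 ≤ (1 - t) ^ τ * (1 + t) ^ τ := by
    rw [← Real.mul_rpow p1.le p2.le]
    exact Real.one_le_rpow_of_pos_of_le_one_of_nonpos (by positivity) (by nlinarith) hτ0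
  have q1 := Real.rpow_pos_of_pos p1 τ
  have q2 := Real.rpow_pos_of_pos p2 τ
  rw [abs_of_nonneg]
  · have e : (1 - t)⁻¹ + (1 + t)⁻¹ - 2 ≤ 4 * t ^ 2 := by
      have : (1 - t)⁻¹ + (1 + t)⁻¹ - 2 = 2 * t^2 / ((1-t)*(1+t)) := by
        field_simp; ring
      rw [this, div_le_iff₀ (by positivity)]
      nlinarith [sq_nonneg t, mul_nonneg (sq_nonneg t) (by nlinarith : (0:ℝ) ≤ 1/4 - t^2)]
    have e0 : 0 ≤ 4 * t^2 := by positivity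
    nlinarith
  · nlinarith [sq_nonneg ((1 - t) ^ τ - (1 + t) ^ τ)]

lemma FF_int {α τ : ℝ} (hα : α ∈ Ioo (0:ℝ) 1) (hτ : -1 < τ) (hτ0 : τ ≤ 0) :
    IntegrableOn (FF α τ) (Ioi 0) := by
  obtain ⟨a0, a1⟩ := hα
  have m := FF_meas α τ
  rw [← Ioc_union_Ioi_eq_Ioi (zero_le_one (α := ℝ)),
    ← Ioc_union_Ioc_eq_Ioc (a := (0:ℝ)) (b := 1/2) (c := 1) (by norm_num) (by norm_num)]
  refine IntegrableOn.union (IntegrableOn.union ?_ ?_) ?_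
  · have i := (intervalIntegral.intervalIntegrable_rpow' (a := 0) (b := 1/2)
      (r := 1 - 2*α) (by linarith)).const_mul 4
    rw [intervalIntegrable_iff_integrableOn_Ioc_of_le (by norm_num)] at i
    refine Integrable.mono' i m.aestronglyMeasurable ?_
    refine (ae_restrict_iff' measurableSet_Ioc).2 (Filter.Eventually.of_forall fun t ht => ?_)
    have : t ∈ Ioo (0:ℝ) 1 := ⟨ht.1, by linarith [ht.2]⟩
    unfold FF
    rw [indicator_of_mem this, norm_mul, Real.norm_eq_abs, Real.norm_eq_abs,
      abs_of_pos (Real.rpow_pos_of_pos ht.1 _)]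
    calc _ ≤ t ^ (-1 - 2*α) * (4 * t^2) :=
          mul_le_mul_of_nonneg_left (phi_small hτ hτ0 ht.1 ht.2) (Real.rpow_nonneg ht.1.le _)
      _ = 4 * (t ^ (-1 - 2*α) * t ^ (2:ℝ)) := by rw [Real.rpow_two]; ring
      _ = _ := by rw [← Real.rpow_add ht.1]; ring_nf
  · have i0 := (intervalIntegral.intervalIntegrable_rpow' (a := 1/2) (b := 0)
      (r := τ) (by linarith)).comp_sub_left 1
    have i := (i0.add (intervalIntegrable_const (c := (2:ℝ)))).const_mul ((1/2:ℝ) ^ (-1 - 2*α))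
    norm_num only [sub_zero] at i
    rw [intervalIntegrable_iff_integrableOn_Ioc_of_le (by norm_num)] at i
    refine Integrable.mono' i m.aestronglyMeasurable ?_
    refine (ae_restrict_iff' measurableSet_Ioc).2 (Filter.Eventually.of_forall fun t ht => ?_)
    have t0 : 0 < t := by linarith [ht.1]
    have q : 0 ≤ (1 - t) ^ τ := Real.rpow_nonneg (by linarith [ht.2]) _
    have q2 : 0 ≤ (1 + t) ^ τ := Real.rpow_nonneg (by linarith [ht.2]) _
    have q3 : (1 + t) ^ τ ≤ 1 := Real.rpow_le_one_of_one_le_of_nonpos (by linarith) hτ0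
    have q4 : (Ioo (0:ℝ) 1).indicator (fun s => (1 - s) ^ τ) t ≤ (1 - t) ^ τ :=
      indicator_apply_le' (fun _ => le_rfl) (fun _ => q)
    have q5 : 0 ≤ (Ioo (0:ℝ) 1).indicator (fun s => (1 - s) ^ τ) t :=
      indicator_apply_nonneg (fun _ => q)
    unfold FF
    rw [norm_mul, Real.norm_eq_abs, Real.norm_eq_abs,
      abs_of_pos (Real.rpow_pos_of_pos t0 _)]
    refine mul_le_mul ?_ ?_ (abs_nonneg _) (by positivity)
    · exact Real.rpow_le_rpow_of_nonpos (by norm_num) ht.1.le (by linarith)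
    · show _ ≤ (1 - t) ^ τ + 2
      rw [abs_le]; constructor <;> linarith
  · have i := (integrableOn_Ioi_rpow_of_lt (a := -1 - 2*α) (c := 1) (by linarith) one_pos).mul_const 2
    refine Integrable.mono' i m.aestronglyMeasurable ?_
    refine (ae_restrict_iff' measurableSet_Ioi).2 (Filter.Eventually.of_forall fun t ht => ?_)
    have ht : 1 < t := ht
    have t0 : 0 < t := by linarith
    have q2 : 0 ≤ (1 + t) ^ τ := Real.rpow_nonneg (by linarith) _
    have q3 : (1 + t) ^ τ ≤ 1 := Real.rpow_le_one_of_one_le_of_nonpos (by linarith) hτ0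
    unfold FF
    rw [norm_mul, Real.norm_eq_abs, Real.norm_eq_abs, indicator_of_notMem (by simp [ht.le]),
      abs_of_pos (Real.rpow_pos_of_pos t0 _)]
    refine mul_le_mul_of_nonneg_left ?_ (by positivity)
    rw [abs_le]; constructor <;> linarith

lemma FF_zero_neg {α : ℝ} (hα : α ∈ Ioo (0:ℝ) 1) : ∫ t in Ioi (0:ℝ), FF α 0 t < 0 := by
  obtain ⟨a0, a1⟩ := hα
  have h : ∫ t in Ioi (0:ℝ), FF α 0 t =
      ∫ t in Ioi (0:ℝ), (Ici (1:ℝ)).indicator (fun t => - t ^ (-1 - 2*α)) t := by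
    refine setIntegral_congr_fun measurableSet_Ioi fun t ht => ?_
    have ht : 0 < t := ht
    unfold FF
    by_cases h : t < 1
    · rw [indicator_of_mem (by simp [h, ht]), indicator_of_notMem (by simp [h])]
      norm_num
    · rw [indicator_of_notMem (by simp [not_lt.1 h]), indicator_of_mem (by simpa using h)]
      norm_num
  rw [h, setIntegral_indicator measurableSet_Ici,
    inter_eq_right.2 (Ici_subset_Ioi.2 one_pos), integral_Ici_eq_integral_Ioi,
    integral_neg, integral_Ioi_rpow_of_lt (by linarith) one_pos, Real.one_rpow]
  rw [show -1 - 2*α + 1 = -(2*α) by ring, neg_div_neg_eq]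
  have : 0 < 1 / (2*α) := by positivity
  linarith

lemma FF_conv {α τ σ : ℝ} (hα : α ∈ Ioo (0:ℝ) 1) (hτ : -1 < τ) (h1 : τ < σ) (h2 : σ < 0)
    (h : ∫ t in Ioi (0:ℝ), FF α τ t = 0) : ∫ t in Ioi (0:ℝ), FF α σ t < 0 := by
  set θ := σ / τ with hθ
  have t0 : τ < 0 := by linarith
  have e : σ = θ * τ := (div_mul_cancel₀ σ t0.ne).symm
  have θ0 : 0 ≤ θ := div_nonneg_of_nonpos h2.le t0.le
  have θ1 : θ < 1 := by rw [hθ, div_lt_one_of_neg t0]; exact h1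
  have iτ := FF_int hα hτ t0.le
  have i0 := FF_int hα (τ := 0) (by norm_num) le_rfl
  have key : ∫ t in Ioi (0:ℝ), FF α σ t ≤ ∫ t in Ioi (0:ℝ), (θ * FF α τ t + (1 - θ) * FF α 0 t) := by
    refine setIntegral_mono_on (FF_int hα (by linarith) h2.le)
      ((iτ.const_mul θ).add (i0.const_mul _)) measurableSet_Ioi fun t ht => ?_
    have ht : 0 < t := ht
    have w2 := wt (a := 1 + t) (τ := τ) (by linarith) θ0 θ1.le
    unfold FF
    rw [show ∀ p a b : ℝ, θ * (p * a) + (1 - θ) * (p * b) = p * (θ * a + (1-θ) * b) by intros; ring]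
    refine mul_le_mul_of_nonneg_left ?_ (by positivity)
    rw [← e] at w2
    by_cases hh : t < 1
    · have w1 := wt (a := 1 - t) (τ := τ) (by linarith) θ0 θ1.le
      rw [← e] at w1
      have : t ∈ Ioo (0:ℝ) 1 := ⟨ht, hh⟩
      simp only [indicator_of_mem this, Real.rpow_zero]
      linarith
    · have : t ∉ Ioo (0:ℝ) 1 := fun h => hh h.2
      simp only [indicator_of_notMem this, Real.rpow_zero]
      linarith
  rw [integral_add (iτ.const_mul θ) (i0.const_mul _), integral_const_mul, integral_const_mul, h] at key
  have := FF_zero_neg hα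
  nlinarith

noncomputable def GG (α v : ℝ) : ℝ := (|(-1:ℝ)| * v ^ ((-1:ℝ) - 1)) • FF α (α - 1) (v ^ (-1:ℝ))

lemma GG_eq {α v N : ℝ} (hv : v ∈ Ioc 0 N) :
    GG α v = (Ioc 1 N).indicator (fun v => (v - 1) ^ (α - 1) * (v - 1 + 1) ^ α) v
      + v ^ α * (v + 1) ^ (α - 1) - 2 * v ^ (2 * α - 1) := by
  obtain ⟨v0, vN⟩ := hv
  unfold GG FF
  have e1 : v ^ ((-1:ℝ) - 1) * (v ^ (-1:ℝ)) ^ (-1 - 2*α) = v ^ (2 * α - 1) := by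
    rw [← Real.rpow_mul v0.le, ← Real.rpow_add v0]; ring_nf
  have e3 : v ^ (2 * α - 1) = v ^ α * v ^ (α - 1) := by
    rw [← Real.rpow_add v0]; ring_nf
  have e2 : (1 + v ^ (-1:ℝ)) ^ (α - 1) * v ^ (α - 1) = (v + 1) ^ (α - 1) := by
    rw [← Real.mul_rpow (by positivity) v0.le, Real.rpow_neg_one]
    congr 1; field_simp
  rw [abs_neg, abs_one, one_mul, smul_eq_mul, ← mul_assoc, e1]
  by_cases h : 1 < v
  · have m1 : v ^ (-1:ℝ) ∈ Ioo (0:ℝ) 1 :=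
      ⟨by positivity, by rw [Real.rpow_neg_one]; exact inv_lt_one_of_one_lt₀ h⟩
    have e4 : (1 - v ^ (-1:ℝ)) ^ (α - 1) * v ^ (α - 1) = (v - 1) ^ (α - 1) := by
      rw [← Real.mul_rpow (by linarith [m1.2]) v0.le, Real.rpow_neg_one]
      congr 1; field_simp
    rw [indicator_of_mem m1, indicator_of_mem (show v ∈ Ioc 1 N from ⟨h, vN⟩), e3, ← e2, ← e4]
    ring_nf
  · have m1 : v ^ (-1:ℝ) ∉ Ioo (0:ℝ) 1 := by
      rw [Real.rpow_neg_one]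
      intro hh
      exact absurd hh.2 (not_lt.2 ((one_le_inv₀ v0).2 (not_lt.1 h)))
    rw [indicator_of_notMem m1, indicator_of_notMem (show v ∉ Ioc 1 N from fun hh => h hh.1), e3, ← e2]
    ring

lemma GG_int {α N : ℝ} (hα : α ∈ Ioo (0:ℝ) 1) (hN : 2 ≤ N) :
    |∫ v in (0:ℝ)..N, GG α v| ≤ (N - 1) ^ (-(2 - 2 * α)) := by
  obtain ⟨a0, a1⟩ := hα
  have cp : ∀ a b : ℝ, ∀ r : ℝ, 0 ≤ a → 0 ≤ b → ContinuousOn (fun w : ℝ => (w + 1) ^ r) (uIcc a b) := by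
    intro a b r ha hb x hx
    have hx0 : 0 ≤ x := le_trans (le_min ha hb) hx.1
    exact (ContinuousAt.rpow_const (by fun_prop) (Or.inl (by positivity))).continuousWithinAt
  have ib : ∀ a b : ℝ, 0 ≤ a → 0 ≤ b →
      IntervalIntegrable (fun v : ℝ => v ^ α * (v + 1) ^ (α - 1)) volume a b := fun a b ha hb =>
    (intervalIntegral.intervalIntegrable_rpow' (by linarith)).mul_continuousOn (cp a b _ ha hb)
  have ia : ∀ a b : ℝ, 0 ≤ a → 0 ≤ b →
      IntervalIntegrable (fun v : ℝ => v ^ (α - 1) * (v + 1) ^ α) volume a b := fun a b ha hb =>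
    (intervalIntegral.intervalIntegrable_rpow' (by linarith)).mul_continuousOn (cp a b _ ha hb)
  have ic : IntervalIntegrable (fun v : ℝ => 2 * v ^ (2 * α - 1)) volume 0 N :=
    (intervalIntegral.intervalIntegrable_rpow' (by linarith)).const_mul 2
  have ia' : IntervalIntegrable (fun v : ℝ => (v - 1) ^ (α - 1) * (v - 1 + 1) ^ α) volume 1 N := by
    have := (ia 0 (N - 1) le_rfl (by linarith)).comp_sub_right 1
    simpa using this
  have iA : IntervalIntegrable ((Ioc 1 N).indicator
      (fun v : ℝ => (v - 1) ^ (α - 1) * (v - 1 + 1) ^ α)) volume 0 N := by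
    rw [intervalIntegrable_iff_integrableOn_Ioc_of_le (by linarith)] at ia'
    exact (ia'.integrable_indicator measurableSet_Ioc).intervalIntegrable
  have eA : ∫ v in (0:ℝ)..N, (Ioc 1 N).indicator
      (fun v : ℝ => (v - 1) ^ (α - 1) * (v - 1 + 1) ^ α) v =
      ∫ w in (0:ℝ)..(N-1), w ^ (α - 1) * (w + 1) ^ α := by
    rw [intervalIntegral.integral_of_le (by linarith), setIntegral_indicator measurableSet_Ioc,
      inter_eq_right.2 (Ioc_subset_Ioc_left zero_le_one), ← intervalIntegral.integral_of_le (by linarith),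
      intervalIntegral.integral_comp_sub_right (fun w => w ^ (α - 1) * (w + 1) ^ α) 1, sub_self]
  have eD : ∫ v in (0:ℝ)..N, 2 * v ^ (2 * α - 1) = N ^ α * N ^ α / α := by
    rw [intervalIntegral.integral_const_mul, integral_rpow (Or.inl (by linarith)),
      ← Real.rpow_add (by linarith), Real.zero_rpow (by linarith), ← two_mul]
    ring_nf
  have eF : ∫ w in (0:ℝ)..(N-1), (w ^ (α - 1) * (w + 1) ^ α + w ^ α * (w + 1) ^ (α - 1)) =
      (N - 1) ^ α * N ^ α / α := by
    rw [intervalIntegral.integral_eq_sub_of_hasDerivAt_of_le (f := fun w => w ^ α * (w + 1) ^ α / α)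
      (by linarith)]
    · simp [Real.zero_rpow a0.ne']
    · refine ContinuousOn.div_const (ContinuousOn.mul ?_ ?_) _
      · exact (Real.continuous_rpow_const a0.le).continuousOn
      · exact ((Real.continuous_rpow_const a0.le).comp (continuous_add_const 1)).continuousOn
    · intro x hx
      have x0 : 0 < x := hx.1
      have d1 := Real.hasDerivAt_rpow_const (x := x) (p := α) (Or.inl x0.ne')
      have d2 := ((hasDerivAt_id x).add_const 1).rpow_const (p := α)
        (Or.inl (by simp only [id]; positivity))
      have d3 := (d1.mul d2).div_const α
      have e : (α * x ^ (α - 1) * (x + 1) ^ α + x ^ α * (1 * α * (x + 1) ^ (α - 1))) / α =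
          x ^ (α - 1) * (x + 1) ^ α + x ^ α * (x + 1) ^ (α - 1) := by
        field_simp
      rw [← e]
      exact d3
    · exact (ia _ _ le_rfl (by linarith)).add (ib _ _ le_rfl (by linarith))
  have eR : ∫ v in (N-1)..N, N ^ α * v ^ (α - 1) = N ^ α * N ^ α / α - (N - 1) ^ α * N ^ α / α := by
    rw [intervalIntegral.integral_const_mul, integral_rpow (Or.inl (by linarith)), sub_add_cancel]
    ring
  have eB : ∫ v in (0:ℝ)..N, v ^ α * (v + 1) ^ (α - 1) =
      (∫ v in (0:ℝ)..(N-1), v ^ α * (v + 1) ^ (α - 1)) + ∫ v in (N-1)..N, v ^ α * (v + 1) ^ (α - 1) :=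
    (intervalIntegral.integral_add_adjacent_intervals (ib _ _ le_rfl (by linarith))
      (ib _ _ (by linarith) (by linarith))).symm
  rw [intervalIntegral.integral_add (ia _ _ le_rfl (by linarith)) (ib _ _ le_rfl (by linarith))] at eF
  have tot : ∫ v in (0:ℝ)..N, GG α v =
      ∫ v in (N-1)..N, (v ^ α * (v + 1) ^ (α - 1) - N ^ α * v ^ (α - 1)) := by
    rw [intervalIntegral.integral_sub (ib _ _ (by linarith) (by linarith))
      ((intervalIntegral.intervalIntegrable_rpow' (by linarith)).const_mul _), eR]
    have : ∫ v in (0:ℝ)..N, GG α v = ∫ v in (0:ℝ)..N, ((Ioc 1 N).indicator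
        (fun v => (v - 1) ^ (α - 1) * (v - 1 + 1) ^ α) v
        + v ^ α * (v + 1) ^ (α - 1) - 2 * v ^ (2 * α - 1)) := by
      rw [intervalIntegral.integral_of_le (by linarith), intervalIntegral.integral_of_le (by linarith)]
      exact setIntegral_congr_fun measurableSet_Ioc fun v hv => GG_eq hv
    rw [this, intervalIntegral.integral_sub (iA.add (ib _ _ le_rfl (by linarith))) ic,
      intervalIntegral.integral_add iA (ib _ _ le_rfl (by linarith)), eA, eB, eD]
    linarith
  rw [tot]
  have fin := intervalIntegral.norm_integral_le_of_norm_le_const (a := N - 1) (b := N)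
    (f := fun v => v ^ α * (v + 1) ^ (α - 1) - N ^ α * v ^ (α - 1)) (C := (N - 1) ^ (-(2 - 2 * α))) ?_
  · simpa using fin
  intro v hv
  rw [uIoc_of_le (by linarith)] at hv
  obtain ⟨v1, v2⟩ := hv
  have M0 : 0 < N - 1 := by linarith
  have v0 : 0 < v := by linarith
  have b1 : v ^ α ≤ N ^ α := Real.rpow_le_rpow v0.le v2 a0.le
  have b2 : (v + 1) ^ (α - 1) ≤ v ^ (α - 1) := Real.rpow_le_rpow_of_nonpos v0 (by linarith) (by linarith)
  have b3 : N ^ α ≤ (v + 1) ^ α := Real.rpow_le_rpow (by linarith) (by linarith) a0.le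
  have b4 : v ^ (α - 1) ≤ (N - 1) ^ (α - 1) := Real.rpow_le_rpow_of_nonpos M0 v1.le (by linarith)
  have c1 : v ^ α = v ^ (α - 1) * v := by rw [← Real.rpow_add_one v0.ne']; ring_nf
  have c2 : (v + 1) ^ α = (v + 1) ^ (α - 1) * (v + 1) := by
    rw [← Real.rpow_add_one (by positivity)]; ring_nf
  have c3 : (N - 1) ^ (-(2 - 2 * α)) = (N - 1) ^ (α - 1) * (N - 1) ^ (α - 1) := by
    rw [← Real.rpow_add M0]; ring_nf
  have p1 := Real.rpow_pos_of_pos v0 (α - 1)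
  have p2 := Real.rpow_pos_of_pos (show 0 < v + 1 by linarith) (α - 1)
  have p3 := Real.rpow_pos_of_pos v0 α
  have u1 : v ^ α * (v + 1) ^ (α - 1) ≤ N ^ α * v ^ (α - 1) := mul_le_mul b1 b2 p2.le (p3.le.trans b1)
  have u2 : N ^ α * v ^ (α - 1) ≤ (v + 1) ^ α * v ^ (α - 1) := mul_le_mul_of_nonneg_right b3 p1.le
  have u3 : v ^ (α - 1) * (v + 1) ^ (α - 1) ≤ (N - 1) ^ (α - 1) * (N - 1) ^ (α - 1) :=
    mul_le_mul b4 (b2.trans b4) p2.le (p1.le.trans b4)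
  rw [Real.norm_eq_abs, abs_sub_comm, abs_of_nonneg (by linarith), c3]
  have u4 : (v + 1) ^ α * v ^ (α - 1) - v ^ α * (v + 1) ^ (α - 1) = v ^ (α - 1) * (v + 1) ^ (α - 1) := by
    rw [c1, c2]; ring
  linarith

lemma FF_root {α : ℝ} (hα : α ∈ Ioo (0:ℝ) 1) : ∫ t in Ioi (0:ℝ), FF α (α - 1) t = 0 := by
  have a0 := hα.1
  have a1 := hα.2
  have i := FF_int hα (τ := α - 1) (by linarith) (by linarith)
  rw [← integrableOn_Ioi_comp_rpow_iff _ (p := -1) (by norm_num)] at i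
  rw [← integral_comp_rpow_Ioi _ (p := -1) (by norm_num)]
  have T := intervalIntegral_tendsto_integral_Ioi 0 i Filter.tendsto_id
  refine tendsto_nhds_unique T ?_
  have T2 : Filter.Tendsto (fun N : ℝ => (N - 1) ^ (-(2 - 2 * α))) Filter.atTop (nhds 0) :=
    (tendsto_rpow_neg_atTop (y := 2 - 2 * α) (by linarith)).comp
      (Filter.tendsto_atTop_add_const_right _ (-1) Filter.tendsto_id)
  refine squeeze_zero_norm' ?_ T2
  filter_upwards [Filter.eventually_ge_atTop 2] with N hN
  exact GG_int hα hN

/-- For `α ∈ (0,1)` and `τ ∈ (-1,0)`, if `C(τ) = 0` then `τ = α - 1`: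
`α - 1` is the unique zero of `C` in `(-1,0)`. -/
theorem stmt_2 (α τ : ℝ) (hα : α ∈ Ioo (0:ℝ) 1) (hτ : τ ∈ Ioo (-1:ℝ) 0)
    (h : ∫ t in Ioi (0:ℝ), t ^ (-1 - 2*α) *
      ((Ioo (0:ℝ) 1).indicator (fun s => (1 - s) ^ τ) t + (1 + t) ^ τ - 2) = 0) :
    τ = α - 1 := by
  have h' : ∫ t in Ioi (0:ℝ), FF α τ t = 0 := h
  have r := FF_root hα
  rcases lt_trichotomy τ (α - 1) with g | g | g
  · have := FF_conv hα hτ.1 g (by linarith [hα.2]) h'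
    linarith
  · exact g
  · have := FF_conv hα (by linarith [hα.1]) g hτ.2 r
    linarith
end

section
/- Let N ≥ 2, α ∈ (0,1), η > 0 and k > 0, and let g : (0,∞) → [0,∞) be continuous and nondecreasing with ∫_1^∞ g(s) s^{-1-(1+α)/(1-α)} ds < ∞. Then lim_{s→0⁺} s^{1-α} ∫_{Q_η} y_N^α |s e_N - y|^{-(N-α)} g(k · y_N^{α-1}) dy = 0. -/
open MeasureTheory Set Filter

theorem aux_scale {E : Type*} [NormedAddCommGroup E] [NormedSpace ℝ E] [FiniteDimensional ℝ E]
    [MeasureSpace E] [BorelSpace E] [(volume : Measure E).IsAddHaarMeasure]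
    (f : E → ENNReal) (a : ℝ) (ha : 0 < a) :
    ∫⁻ x : E, f (a⁻¹ • x) = ENNReal.ofReal (a ^ (Module.finrank ℝ E)) * ∫⁻ x, f x := by
  have h := (MeasurableEquiv.smul₀ a⁻¹ (inv_ne_zero ha.ne') : E ≃ᵐ E).measurableEmbedding.lintegral_map
    (μ := volume) f
  have h2 := Measure.map_addHaar_smul (volume : Measure E) (inv_ne_zero ha.ne')
  simp only [MeasurableEquiv.coe_smul₀] at h
  rw [h2, lintegral_smul_measure] at h
  rw [← h]
  congr 2
  rw [inv_pow, inv_inv, abs_of_pos (by positivity)]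

theorem aux_kernel (n : ℕ) (r : ℝ) (hr : (n:ℝ) < r) :
    ∃ C : ENNReal, C ≠ ⊤ ∧ ∀ a : ℝ, 0 < a →
      ∫⁻ x : Fin n → ℝ, ENNReal.ofReal ((a + ‖x‖) ^ (-r)) = C * ENNReal.ofReal (a ^ ((n:ℝ) - r)) := by
  refine ⟨∫⁻ x : Fin n → ℝ, ENNReal.ofReal ((1 + ‖x‖) ^ (-r)), ?_, ?_⟩
  · exact (finite_integral_one_add_norm (by simpa using hr)).ne
  intro a ha
  have h := aux_scale (fun x : Fin n → ℝ => ENNReal.ofReal ((1 + ‖x‖) ^ (-r))) a ha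
  have h2 : ∀ x : Fin n → ℝ, ENNReal.ofReal ((a + ‖x‖) ^ (-r)) =
      ENNReal.ofReal (a ^ (-r)) * ENNReal.ofReal ((1 + ‖a⁻¹ • x‖) ^ (-r)) := by
    intro x
    rw [← ENNReal.ofReal_mul (by positivity), ← Real.mul_rpow ha.le (by positivity), norm_smul,
      Real.norm_of_nonneg (by positivity), mul_add, mul_inv_cancel_left₀ ha.ne', mul_one]
  simp_rw [h2]
  rw [lintegral_const_mul' _ _ ENNReal.ofReal_ne_top, h, ← mul_assoc,
    ← ENNReal.ofReal_mul (by positivity), mul_comm]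
  congr 2
  rw [Module.finrank_fin_fun, ← Real.rpow_natCast, ← Real.rpow_add ha]
  ring_nf

theorem aux_near (α : ℝ) (hα : α ∈ Ioo (0:ℝ) 1) :
    ∃ C : ENNReal, C ≠ ⊤ ∧ ∀ s : ℝ, 0 < s →
      ∫⁻ t in {t : ℝ | |s - t| < s / 2}, ENNReal.ofReal (|s - t| ^ (α - 1)) =
        C * ENNReal.ofReal (s ^ α) := by
  obtain ⟨h0, h1⟩ := hα
  have hms : ∀ s : ℝ, MeasurableSet {t : ℝ | |s - t| < s / 2} := fun s =>
    measurableSet_lt (by fun_prop) (by fun_prop)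
  refine ⟨∫⁻ t in {t : ℝ | |1 - t| < 1 / 2}, ENNReal.ofReal (|1 - t| ^ (α - 1)), ?_, ?_⟩
  · have h2 : IntervalIntegrable (fun x : ℝ => x ^ (α - 1)) volume 0 1 :=
      intervalIntegral.intervalIntegrable_rpow' (by linarith)
    have h3 : Integrable (fun x : ℝ => |x| ^ (α - 1)) (volume.restrict (Ioc 0 1)) := by
      have := h2.1
      refine (integrableOn_congr_fun ?_ measurableSet_Ioc).1 this
      intro x hx
      simp [abs_of_pos hx.1]
    have hfin : ∫⁻ t in Ioc (0:ℝ) 1, ENNReal.ofReal (|t| ^ (α - 1)) ≠ ⊤ := h3.lintegral_lt_top.ne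
    let f : ℝ → ENNReal := (Ioc (0:ℝ) 1).indicator (fun t => ENNReal.ofReal (|t| ^ (α - 1)))
    have hf : Measurable f := Measurable.indicator (by fun_prop) measurableSet_Ioc
    have hif : ∫⁻ t, f t ≠ ⊤ := by
      rw [lintegral_indicator measurableSet_Ioc]; exact hfin
    have ha : ∫⁻ t : ℝ, f (1 - t) = ∫⁻ t, f t := lintegral_sub_left_eq_self f 1
    have hb : ∫⁻ t : ℝ, f (t - 1) = ∫⁻ t, f t := lintegral_sub_right_eq_self f 1
    have hle : ∫⁻ t in {t : ℝ | |1 - t| < 1 / 2}, ENNReal.ofReal (|1 - t| ^ (α - 1)) ≤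
        ∫⁻ t : ℝ, (f (1 - t) + f (t - 1)) := by
      rw [← lintegral_indicator (hms 1)]
      refine lintegral_mono fun t => ?_
      by_cases ht : |1 - t| < 1/2
      · rw [indicator_of_mem (by exact ht)]
        rw [abs_lt] at ht
        rcases lt_trichotomy t 1 with h | h | h
        · refine le_add_right ?_
          simp only [f]
          rw [indicator_of_mem (show 1 - t ∈ Ioc (0:ℝ) 1 from ⟨by linarith, by linarith⟩)]
        · subst h; simp [Real.zero_rpow (by linarith : α - 1 ≠ 0)]
        · refine le_add_left ?_
          simp only [f]
          rw [indicator_of_mem (show t - 1 ∈ Ioc (0:ℝ) 1 from ⟨by linarith, by linarith⟩), abs_sub_comm]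
      · rw [indicator_of_notMem (by exact ht)]; simp
    refine ne_top_of_le_ne_top ?_ hle
    rw [lintegral_add_left (by fun_prop), ha, hb]
    exact ENNReal.add_ne_top.2 ⟨hif, hif⟩
  · intro s hs
    rw [← lintegral_indicator (hms s), ← lintegral_indicator (hms 1)]
    have h := aux_scale ({t : ℝ | |1 - t| < 1 / 2}.indicator
      (fun t => ENNReal.ofReal (|1 - t| ^ (α - 1)))) s hs
    have h2 : ∀ t : ℝ, {t : ℝ | |s - t| < s / 2}.indicator
          (fun t => ENNReal.ofReal (|s - t| ^ (α - 1))) t =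
        ENNReal.ofReal (s ^ (α - 1)) * ({t : ℝ | |1 - t| < 1 / 2}.indicator
      (fun t => ENNReal.ofReal (|1 - t| ^ (α - 1)))) (s⁻¹ • t) := by
      intro t
      have e : |s - t| = s * |1 - s⁻¹ • t| := by
        rw [← abs_of_pos hs, ← abs_mul, abs_of_pos hs, smul_eq_mul, mul_sub,
          mul_inv_cancel_left₀ hs.ne', mul_one]
      by_cases ht : |s - t| < s / 2
      · rw [indicator_of_mem (by exact ht), indicator_of_mem, ← ENNReal.ofReal_mul (by positivity),
          ← Real.mul_rpow hs.le (by positivity), e]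
        rw [e] at ht
        change |1 - s⁻¹ • t| < 1 / 2
        nlinarith
      · rw [indicator_of_notMem (by exact ht), indicator_of_notMem, mul_zero]
        intro h
        apply ht
        rw [e]
        change |1 - s⁻¹ • t| < 1 / 2 at h
        nlinarith
    simp_rw [h2]
    rw [lintegral_const_mul' _ _ ENNReal.ofReal_ne_top, h, ← mul_assoc,
      ← ENNReal.ofReal_mul (by positivity), mul_comm]
    congr 2
    rw [Module.finrank_self, ← Real.rpow_natCast, ← Real.rpow_add hs]
    norm_num

theorem aux_far (α η : ℝ) (hα : α ∈ Ioo (0:ℝ) 1) (φ : ℝ → ENNReal) (hφ : Measurable φ)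
    (hfin : ∫⁻ t in Ioo 0 η, φ t ≠ ⊤) :
    Tendsto (fun s : ℝ => ∫⁻ t in Ioo 0 η, φ t * {t : ℝ | |s - t| < s / 2}ᶜ.indicator
      (fun t => ENNReal.ofReal (s ^ (1 - α) * |s - t| ^ (α - 1))) t)
      (nhdsWithin 0 (Ioi (0:ℝ))) (nhds 0) := by
  obtain ⟨h0, h1⟩ := hα
  have hms : ∀ s : ℝ, MeasurableSet {t : ℝ | |s - t| < s / 2} := fun s =>
    measurableSet_lt (by fun_prop) (by fun_prop)
  have hfinae : ∀ᵐ t ∂(volume.restrict (Ioo 0 η)), φ t < ⊤ := ae_lt_top hφ hfin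
  have key := tendsto_lintegral_filter_of_dominated_convergence (μ := volume.restrict (Ioo 0 η))
    (l := nhdsWithin 0 (Ioi (0:ℝ)))
    (F := fun s t => φ t * {t : ℝ | |s - t| < s / 2}ᶜ.indicator
      (fun t => ENNReal.ofReal (s ^ (1 - α) * |s - t| ^ (α - 1))) t) (f := fun _ => 0)
    (fun t => φ t * ENNReal.ofReal (2 ^ (1 - α))) ?_ ?_ ?_ ?_
  · simpa using key
  · refine Eventually.of_forall fun s => hφ.mul ?_
    exact Measurable.indicator (by fun_prop) (hms s).compl
  · filter_upwards [self_mem_nhdsWithin] with s hs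
    have hs : 0 < s := hs
    refine Eventually.of_forall fun t => ?_
    gcongr
    by_cases ht : |s - t| < s / 2
    · rw [indicator_of_notMem (by simpa using ht)]; exact zero_le
    rw [indicator_of_mem (by simpa using ht)]
    have ht : s / 2 ≤ |s - t| := not_lt.1 ht
    apply ENNReal.ofReal_le_ofReal
    calc s ^ (1 - α) * |s - t| ^ (α - 1) ≤ s ^ (1 - α) * (s / 2) ^ (α - 1) := by
          gcongr ?_ * ?_
          exact Real.rpow_le_rpow_of_nonpos (by positivity) ht (by linarith)
      _ = 2 ^ (1 - α) := by
          rw [show α - 1 = -(1 - α) by ring, Real.rpow_neg (by positivity),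
            Real.div_rpow hs.le (by norm_num)]
          field_simp
  · rw [lintegral_mul_const' _ _ ENNReal.ofReal_ne_top]
    exact ENNReal.mul_ne_top hfin ENNReal.ofReal_ne_top
  · filter_upwards [hfinae, ae_restrict_mem measurableSet_Ioo] with t hft ht
    have hlim : Tendsto (fun s : ℝ => ENNReal.ofReal (s ^ (1 - α) * |s - t| ^ (α - 1)))
        (nhdsWithin 0 (Ioi (0:ℝ))) (nhds 0) := by
      have : ContinuousAt (fun s : ℝ => s ^ (1 - α) * |s - t| ^ (α - 1)) 0 := by
        refine ContinuousAt.mul ?_ ?_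
        · exact Real.continuousAt_rpow_const _ _ (Or.inr (by linarith))
        · refine ContinuousAt.rpow_const (by fun_prop) (Or.inl ?_)
          simp [ht.1.ne']
      have := (this.tendsto.mono_left nhdsWithin_le_nhds : Tendsto _ (nhdsWithin 0 (Ioi (0:ℝ))) _)
      rw [Real.zero_rpow (by linarith), zero_mul] at this
      simpa using ENNReal.tendsto_ofReal this
    have h2 := ENNReal.Tendsto.const_mul (a := φ t) hlim (Or.inr hft.ne)
    rw [mul_zero] at h2
    refine tendsto_of_tendsto_of_tendsto_of_le_of_le tendsto_const_nhds h2 (fun _ => zero_le) ?_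
    intro s
    exact mul_le_mul_right (indicator_le_self _ _ _) _

theorem aux_one (α η : ℝ) (hη : 0 < η) (hα : α ∈ Ioo (0:ℝ) 1) (h : ℝ → ℝ) (hm : Measurable h)
    (hanti : AntitoneOn h (Ioi 0)) (hpos : ∀ t > 0, 0 ≤ h t)
    (hfin : ∫⁻ t in Ioo 0 η, ENNReal.ofReal (t ^ α * h t) ≠ ⊤) :
    Tendsto (fun s : ℝ => ENNReal.ofReal (s ^ (1 - α)) *
      ∫⁻ t in Ioo 0 η, ENNReal.ofReal (t ^ α * h t) * ENNReal.ofReal (|s - t| ^ (α - 1)))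
      (nhdsWithin 0 (Ioi (0:ℝ))) (nhds 0) := by
  have hms : ∀ s : ℝ, MeasurableSet {t : ℝ | |s - t| < s / 2} := fun s =>
    measurableSet_lt (by fun_prop) (by fun_prop)
  have hfar := aux_far α η hα _ (show Measurable fun t => ENNReal.ofReal (t ^ α * h t) by fun_prop)
    hfin
  obtain ⟨C, hC, hnear⟩ := aux_near α hα
  obtain ⟨h0, h1⟩ := hα
  -- small integral
  have hsmall : Tendsto (fun s : ℝ => ∫⁻ t in Ioo 0 (s / 2), ENNReal.ofReal (t ^ α * h t))
      (nhdsWithin 0 (Ioi (0:ℝ))) (nhds 0) := by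
    have := tendsto_setLIntegral_zero hfin (l := nhdsWithin 0 (Ioi (0:ℝ)))
      (s := fun s : ℝ => Ioo 0 (s / 2)) ?_
    · refine this.congr' ?_
      filter_upwards [Ioo_mem_nhdsGT hη] with s hs
      rw [Measure.restrict_restrict measurableSet_Ioo, inter_eq_left.2]
      exact Ioo_subset_Ioo_right (by linarith [hs.1, hs.2])
    · have h3 : Tendsto (fun s : ℝ => ENNReal.ofReal (s / 2)) (nhdsWithin 0 (Ioi (0:ℝ))) (nhds 0) := by
        have : Tendsto (fun s : ℝ => s / 2) (nhdsWithin 0 (Ioi (0:ℝ))) (nhds (0 / 2)) :=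
          (Continuous.tendsto (by fun_prop) 0).mono_left nhdsWithin_le_nhds
        simpa using ENNReal.tendsto_ofReal this
      refine tendsto_of_tendsto_of_tendsto_of_le_of_le tendsto_const_nhds h3 (fun _ => zero_le) ?_
      intro s
      refine (Measure.restrict_apply_le _ _).trans ?_
      simp
  have hsum := hfar.add (ENNReal.Tendsto.const_mul (a := C * ENNReal.ofReal (2 ^ α * 4 ^ (1 + α)))
    hsmall (Or.inr (ENNReal.mul_ne_top hC ENNReal.ofReal_ne_top)))
  rw [mul_zero, add_zero] at hsum
  refine tendsto_of_tendsto_of_tendsto_of_le_of_le' tendsto_const_nhds hsum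
    (Eventually.of_forall fun _ => zero_le) ?_
  filter_upwards [Ioo_mem_nhdsGT hη] with s hs
  obtain ⟨hs, hsη⟩ := hs
  rw [← lintegral_const_mul' _ _ ENNReal.ofReal_ne_top]
  -- near integrand
  let G : ℝ → ENNReal := {t : ℝ | |s - t| < s / 2}.indicator
    (fun t => ENNReal.ofReal (s ^ (1 - α) * ((2 * s) ^ α * h (s / 2))) *
      ENNReal.ofReal (|s - t| ^ (α - 1)))
  have hG : Measurable G := Measurable.indicator (by fun_prop) (hms s)
  have hs2 : 0 ≤ h (s / 2) := hpos _ (by positivity)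
  calc _ ≤ ∫⁻ t in Ioo 0 η, (ENNReal.ofReal (t ^ α * h t) * {t : ℝ | |s - t| < s / 2}ᶜ.indicator
      (fun t => ENNReal.ofReal (s ^ (1 - α) * |s - t| ^ (α - 1))) t + G t) := by
        refine setLIntegral_mono' measurableSet_Ioo fun t ht => ?_
        by_cases hts : |s - t| < s / 2
        · refine le_add_left ?_
          simp only [G]
          rw [indicator_of_mem (by exact hts), ← mul_assoc, ← ENNReal.ofReal_mul (by positivity)]
          gcongr ENNReal.ofReal (_ * ?_) * _
          rw [abs_lt] at hts
          have : h t ≤ h (s / 2) := hanti (mem_Ioi.2 (by positivity)) ht.1 (by linarith)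
          have h4 : 0 ≤ h t := hpos _ ht.1
          have h5 : t ^ α ≤ (2 * s) ^ α := Real.rpow_le_rpow ht.1.le (by linarith) h0.le
          gcongr
        · refine le_add_right ?_
          rw [indicator_of_mem (by exact hts), ENNReal.ofReal_mul (p := s ^ (1 - α)) (by positivity)]
          exact le_of_eq (by ring)
    _ = (∫⁻ t in Ioo 0 η, (ENNReal.ofReal (t ^ α * h t) * {t : ℝ | |s - t| < s / 2}ᶜ.indicator
      (fun t => ENNReal.ofReal (s ^ (1 - α) * |s - t| ^ (α - 1))) t)) + ∫⁻ t in Ioo 0 η, G t :=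
        lintegral_add_right _ hG
    _ ≤ _ := by
        gcongr ?_ + ?_
        · exact le_rfl
        have e1 : ∫⁻ t in Ioo 0 η, G t ≤
            ENNReal.ofReal (s ^ (1 - α) * ((2 * s) ^ α * h (s / 2))) * (C * ENNReal.ofReal (s ^ α)) := by
          refine (setLIntegral_le_lintegral _ _).trans ?_
          simp only [G]
          rw [lintegral_indicator (hms s), lintegral_const_mul' _ _ ENNReal.ofReal_ne_top, hnear s hs]
        have e2 : ENNReal.ofReal ((s / 4) ^ α * h (s / 2)) * ENNReal.ofReal (s / 4) ≤
            ∫⁻ t in Ioo 0 (s / 2), ENNReal.ofReal (t ^ α * h t) := by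
          calc _ = ∫⁻ t in Ioo (s / 4) (s / 2), ENNReal.ofReal ((s / 4) ^ α * h (s / 2)) := by
                rw [setLIntegral_const, Real.volume_Ioo]
                congr 2; ring
            _ ≤ ∫⁻ t in Ioo (s / 4) (s / 2), ENNReal.ofReal (t ^ α * h t) := by
                refine setLIntegral_mono' measurableSet_Ioo fun t ht => ?_
                have ht0 : 0 < t := by linarith [ht.1]
                have : h (s / 2) ≤ h t := hanti ht0 (mem_Ioi.2 (by positivity)) ht.2.le
                have h5 : (s / 4) ^ α ≤ t ^ α := Real.rpow_le_rpow (by positivity) ht.1.le h0.le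
                gcongr
            _ ≤ _ := lintegral_mono_set (Ioo_subset_Ioo_left (by positivity))
        refine e1.trans ?_
        refine le_trans (le_of_eq ?_) (mul_le_mul_right e2 _)
        rw [← ENNReal.ofReal_mul (by positivity), mul_left_comm, mul_assoc,
          ← ENNReal.ofReal_mul (by positivity), ← ENNReal.ofReal_mul (by positivity)]
        congr 2
        rw [Real.mul_rpow (by norm_num) hs.le, Real.div_rpow hs.le (by norm_num),
          Real.rpow_sub hs, Real.rpow_add (by norm_num : (0:ℝ) < 4), Real.rpow_one, Real.rpow_one]
        field_simp

theorem aux_fin (α η k : ℝ) (hα : α ∈ Ioo (0:ℝ) 1) (hk : 0 < k) (g : ℝ → ℝ)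
    (hg_mono : MonotoneOn g (Ioi (0:ℝ)))
    (hg_nonneg : ∀ s > (0:ℝ), 0 ≤ g s)
    (hg_int : ∫⁻ s in Ioi (1:ℝ), ENNReal.ofReal (g s * s ^ (-1 - (1+α)/(1-α))) < ⊤) :
    ∫⁻ t in Ioo 0 η, ENNReal.ofReal (t ^ α * g (k * t ^ (α - 1))) ≠ ⊤ := by
  obtain ⟨h0, h1⟩ := hα
  have h1' : 0 < 1 - α := by linarith
  let f : ℝ → ℝ := fun t => k * t ^ (α - 1)
  let S : Set ℝ := Ioi 0 ∩ {t | 1 < f t}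
  have hS : MeasurableSet S := measurableSet_Ioi.inter
    (measurableSet_lt (by fun_prop) (by fun_prop))
  have hd : ∀ x ∈ S, HasDerivWithinAt f (k * ((α - 1) * x ^ (α - 1 - 1))) S x := fun x hx =>
    ((Real.hasDerivAt_rpow_const (Or.inl hx.1.ne')).const_mul k).hasDerivWithinAt
  have hinj : InjOn f S := by
    intro x hx y hy hxy
    have : x ^ (α - 1) = y ^ (α - 1) := mul_left_cancel₀ hk.ne' hxy
    exact (Real.rpow_left_inj hx.1.le hy.1.le (by linarith)).1 this
  have hcv := lintegral_image_eq_lintegral_abs_deriv_mul hS hd hinj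
    (fun s => ENNReal.ofReal (g s * s ^ (-1 - (1+α)/(1-α))))
  have himg : f '' S ⊆ Ioi 1 := by
    rintro _ ⟨x, hx, rfl⟩
    exact hx.2
  have hfinS := ((lintegral_mono_set himg).trans_lt hg_int).ne
  rw [hcv] at hfinS
  set p : ℝ := -1 - (1+α)/(1-α) with hp
  have hp2 : (α - 1) * p = 2 := by
    rw [hp]; field_simp; ring
  have hSψ : ∫⁻ t in S, ENNReal.ofReal (t ^ α * g (k * t ^ (α - 1))) ≠ ⊤ := by
    have : ∫⁻ t in S, ENNReal.ofReal (t ^ α * g (k * t ^ (α - 1))) =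
        ∫⁻ t in S, ENNReal.ofReal (((1 - α) * k * k ^ p)⁻¹) *
          (ENNReal.ofReal |k * ((α - 1) * t ^ (α - 1 - 1))| *
            ENNReal.ofReal (g (f t) * f t ^ p)) := by
      refine setLIntegral_congr_fun hS fun t ht => ?_
      have ht0 : 0 < t := ht.1
      rw [← ENNReal.ofReal_mul (abs_nonneg _), ← ENNReal.ofReal_mul (by positivity)]
      congr 1
      have e1 : |k * ((α - 1) * t ^ (α - 1 - 1))| = k * ((1 - α) * t ^ (α - 1 - 1)) := by
        rw [abs_mul, abs_mul, abs_of_pos hk, abs_of_neg (by linarith : α - 1 < 0),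
          abs_of_pos (by positivity)]
        ring
      have e2 : f t ^ p = k ^ p * t ^ (2:ℝ) := by
        simp only [f]
        rw [Real.mul_rpow hk.le (by positivity), ← Real.rpow_mul ht0.le, hp2]
      have e3 : t ^ α = t ^ (α - 1 - 1) * t ^ (2:ℝ) := by
        rw [← Real.rpow_add ht0]; ring_nf
      rw [e1, e2, e3]
      simp only [f]
      have : k ^ p ≠ 0 := by positivity
      field_simp
    rw [this, lintegral_const_mul' _ _ ENNReal.ofReal_ne_top]
    exact ENNReal.mul_ne_top ENNReal.ofReal_ne_top hfinS
  have hrest : ∫⁻ t in Ioo 0 η \ S, ENNReal.ofReal (t ^ α * g (k * t ^ (α - 1))) ≠ ⊤ := by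
    have : ∫⁻ t in Ioo 0 η \ S, ENNReal.ofReal (t ^ α * g (k * t ^ (α - 1))) ≤
        ∫⁻ t in Ioo 0 η \ S, ENNReal.ofReal (η ^ α * g 1) := by
      refine setLIntegral_mono' (measurableSet_Ioo.diff hS) fun t ht => ?_
      obtain ⟨⟨ht0, htη⟩, htS⟩ := ht
      have hle : f t ≤ 1 := by
        by_contra hc
        exact htS ⟨ht0, not_le.1 hc⟩
      have hf0 : 0 < f t := by simp only [f]; positivity
      have h3 : g (k * t ^ (α - 1)) ≤ g 1 := hg_mono hf0 (mem_Ioi.2 one_pos) hle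
      have h4 : t ^ α ≤ η ^ α := Real.rpow_le_rpow ht0.le htη.le h0.le
      have h5 : 0 ≤ g (k * t ^ (α - 1)) := hg_nonneg _ hf0
      have h6 : 0 ≤ η ^ α := Real.rpow_nonneg (ht0.trans htη).le _
      gcongr
    refine ne_top_of_le_ne_top ?_ this
    rw [setLIntegral_const]
    refine ENNReal.mul_ne_top ENNReal.ofReal_ne_top ?_
    exact ne_top_of_le_ne_top (by simp) (measure_mono sdiff_subset : _ ≤ volume (Ioo 0 η))
  refine ne_top_of_le_ne_top (ENNReal.add_ne_top.2 ⟨hSψ, hrest⟩) ?_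
  refine (lintegral_mono_set ?_).trans (lintegral_union_le _ _ _)
  intro t ht
  by_cases h : t ∈ S
  · exact Or.inl h
  · exact Or.inr ⟨ht, h⟩

theorem aux_norm (n : ℕ) (iN : Fin (n + 1)) (s r : ℝ) (hr : 0 < r)
    (y : EuclideanSpace ℝ (Fin (n + 1))) :
    ‖s • EuclideanSpace.single iN (1:ℝ) - y‖ ^ (-r) ≤
      2 ^ r * (|s - y iN| + ‖fun j => y (iN.succAbove j)‖) ^ (-r) := by
  set v := s • EuclideanSpace.single iN (1:ℝ) - y with hv
  have hvN : v iN = s - y iN := by simp [hv]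
  have hvj : ∀ j, v (iN.succAbove j) = - y (iN.succAbove j) := by
    intro j; simp [hv, Fin.succAbove_ne]
  have ha : |s - y iN| ≤ ‖v‖ := by
    rw [← hvN]; exact PiLp.norm_apply_le v iN
  have hb : ‖fun j => y (iN.succAbove j)‖ ≤ ‖v‖ := by
    refine (pi_norm_le_iff_of_nonneg (norm_nonneg _)).2 fun j => ?_
    rw [← norm_neg, ← hvj]
    exact PiLp.norm_apply_le v _
  rcases eq_or_lt_of_le (show 0 ≤ |s - y iN| + ‖fun j => y (iN.succAbove j)‖ by positivity) with h | h
  · have h1 : |s - y iN| = 0 := by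
      have := norm_nonneg (fun j => y (iN.succAbove j)); have := abs_nonneg (s - y iN); linarith
    have h2 : ‖fun j => y (iN.succAbove j)‖ = 0 := by linarith
    have hv0 : v = 0 := by
      ext i
      rcases Fin.eq_self_or_eq_succAbove iN i with rfl | ⟨j, rfl⟩
      · rw [hvN]; simpa using h1
      · rw [hvj]
        have := congrFun (norm_eq_zero.1 h2) j
        simpa using this
    rw [hv0, norm_zero, Real.zero_rpow (by linarith)]
    positivity
  · calc ‖v‖ ^ (-r) ≤ ((|s - y iN| + ‖fun j => y (iN.succAbove j)‖) / 2) ^ (-r) :=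
          Real.rpow_le_rpow_of_nonpos (by positivity) (by linarith) (by linarith)
      _ = _ := by
          rw [Real.div_rpow h.le (by norm_num), Real.rpow_neg (by norm_num : (0:ℝ) ≤ 2)]
          field_simp

theorem aux_fubini (n : ℕ) (iN : Fin (n + 1)) (α η : ℝ) (hα : α ∈ Ioo (0:ℝ) 1) :
    ∃ C : ENNReal, C ≠ ⊤ ∧ ∀ (s : ℝ) (φ : ℝ → ℝ), (∀ t ∈ Ioo 0 η, 0 ≤ φ t) →
      ∫⁻ y in {y : EuclideanSpace ℝ (Fin (n + 1)) | y iN ∈ Ioo 0 η},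
        ENNReal.ofReal (φ (y iN) *
          ‖s • EuclideanSpace.single iN (1:ℝ) - y‖ ^ (-(((n + 1 : ℕ) : ℝ) - α))) ≤
      C * ∫⁻ t in Ioo 0 η, ENNReal.ofReal (φ t) * ENNReal.ofReal (|s - t| ^ (α - 1)) := by
  obtain ⟨h0, h1⟩ := hα
  set r : ℝ := ((n + 1 : ℕ) : ℝ) - α with hr
  have hnr : (n : ℝ) < r := by rw [hr]; push_cast; linarith
  have hr0 : 0 < r := lt_of_le_of_lt (Nat.cast_nonneg n) hnr
  obtain ⟨C, hC, hK⟩ := aux_kernel n r hnr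
  refine ⟨ENNReal.ofReal (2 ^ r) * C, ENNReal.mul_ne_top ENNReal.ofReal_ne_top hC, ?_⟩
  intro s φ hφ
  let H : ℝ × (Fin n → ℝ) → ENNReal := fun p =>
    (Ioo 0 η).indicator (fun t => ENNReal.ofReal (φ t)) p.1 *
      (ENNReal.ofReal (2 ^ r) * ENNReal.ofReal ((|s - p.1| + ‖p.2‖) ^ (-r)))
  have hQ : MeasurableSet {y : EuclideanSpace ℝ (Fin (n + 1)) | y iN ∈ Ioo 0 η} :=
    measurableSet_Ioo.preimage (by fun_prop)
  have hmp := (volume_preserving_piFinSuccAbove (fun _ : Fin (n + 1) => ℝ) iN).comp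
    (EuclideanSpace.volume_preserving_symm_measurableEquiv_toLp (Fin (n + 1)))
  have hemb := (MeasurableEquiv.piFinSuccAbove (fun _ : Fin (n + 1) => ℝ) iN).measurableEmbedding.comp
    (MeasurableEquiv.toLp 2 (Fin (n + 1) → ℝ)).symm.measurableEmbedding
  have hH := hmp.lintegral_comp_emb hemb H
  calc _ ≤ ∫⁻ y : EuclideanSpace ℝ (Fin (n + 1)), H (y iN, fun j => y (iN.succAbove j)) := by
        rw [← lintegral_indicator hQ]
        refine lintegral_mono fun y => ?_
        by_cases hy : y iN ∈ Ioo 0 η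
        · rw [indicator_of_mem (by exact hy)]
          simp only [H]
          rw [indicator_of_mem hy, ← ENNReal.ofReal_mul (by positivity),
            ← ENNReal.ofReal_mul (hφ _ hy)]
          exact ENNReal.ofReal_le_ofReal
            (mul_le_mul_of_nonneg_left (aux_norm n iN s r hr0 y) (hφ _ hy))
        · rw [indicator_of_notMem (by exact hy)]; exact zero_le
    _ = ∫⁻ p, H p := hH
    _ ≤ ∫⁻ t, ∫⁻ x, H (t, x) := lintegral_prod_le H
    _ ≤ ∫⁻ t, ENNReal.ofReal (2 ^ r) * C * (Ioo 0 η).indicator (fun t => ENNReal.ofReal (φ t) *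
          ENNReal.ofReal (|s - t| ^ (α - 1))) t := by
        have hne : ∀ᵐ t : ℝ, t ≠ s := by
          simp [ae_iff]
        refine lintegral_mono_ae ?_
        filter_upwards [hne] with t ht
        have hts : 0 < |s - t| := abs_pos.2 (sub_ne_zero.2 ht.symm)
        by_cases hy : t ∈ Ioo 0 η
        · simp only [H]
          rw [indicator_of_mem hy, indicator_of_mem hy,
            lintegral_const_mul' _ _ ENNReal.ofReal_ne_top,
            lintegral_const_mul' _ _ ENNReal.ofReal_ne_top, hK _ hts]
          have : (n : ℝ) - r = α - 1 := by rw [hr]; push_cast; ring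
          rw [this]
          exact le_of_eq (by ring)
        · simp [H, hy]
    _ = _ := by
        rw [lintegral_const_mul' _ _ (ENNReal.mul_ne_top ENNReal.ofReal_ne_top hC),
          lintegral_indicator measurableSet_Ioo]

/-- Flat (half-space) model of the boundary estimate. -/
theorem stmt_13 (N : ℕ) (hN : 2 ≤ N) (iN : Fin N) (hiN : (iN : ℕ) = N - 1)
    (α η k : ℝ) (hα : α ∈ Ioo (0:ℝ) 1) (hη : 0 < η) (hk : 0 < k) (g : ℝ → ℝ)
    (hg_cont : ContinuousOn g (Ioi (0:ℝ))) (hg_mono : MonotoneOn g (Ioi (0:ℝ)))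
    (hg_nonneg : ∀ s > (0:ℝ), 0 ≤ g s)
    (hg_int : ∫⁻ s in Ioi (1:ℝ), ENNReal.ofReal (g s * s ^ (-1 - (1+α)/(1-α))) < ⊤) :
    Tendsto
      (fun s : ℝ => ENNReal.ofReal (s ^ (1 - α)) *
        ∫⁻ y in {y : EuclideanSpace ℝ (Fin N) |
            Real.sqrt (∑ i ∈ Finset.univ.erase iN, (y i) ^ 2) < η ∧
            0 < y iN ∧ y iN < η},
          ENNReal.ofReal ((y iN) ^ α *
            ‖s • EuclideanSpace.single iN (1:ℝ) - y‖ ^ (-((N:ℝ) - α)) *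
            g (k * (y iN) ^ (α - 1))))
      (nhdsWithin 0 (Ioi (0:ℝ))) (nhds 0) := by
  obtain ⟨n, rfl⟩ : ∃ n, N = n + 1 := ⟨N - 1, by omega⟩
  have hpow : ∀ t : ℝ, 0 < t → 0 < k * t ^ (α - 1) := fun t ht => by positivity
  let g' : ℝ → ℝ := (Ioi (0:ℝ)).indicator g
  have hg' : ∀ t > 0, g' t = g t := fun t ht => indicator_of_mem (mem_Ioi.2 ht) g
  have hg'm : Measurable g' := by
    have := hg_cont.measurable_piecewise (g := fun _ => (0:ℝ)) continuousOn_const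
      measurableSet_Ioi
    rwa [show (fun _ : ℝ => (0:ℝ)) = 0 from rfl, Set.piecewise_eq_indicator] at this
  let h : ℝ → ℝ := fun t => g' (k * t ^ (α - 1))
  have hh : ∀ t > 0, h t = g (k * t ^ (α - 1)) := fun t ht => hg' _ (hpow t ht)
  have hm : Measurable h := hg'm.comp (by fun_prop)
  have hpos : ∀ t > 0, 0 ≤ h t := fun t ht => by
    rw [hh t ht]; exact hg_nonneg _ (hpow t ht)
  have hanti : AntitoneOn h (Ioi 0) := by
    intro x hx y hy hxy
    have hx : 0 < x := hx
    have hy : 0 < y := hy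
    rw [hh x hx, hh y hy]
    refine hg_mono (hpow y hy) (hpow x hx) ?_
    have := Real.rpow_le_rpow_of_nonpos hx hxy (by linarith [hα.2] : α - 1 ≤ 0)
    gcongr
  have hfin : ∫⁻ t in Ioo 0 η, ENNReal.ofReal (t ^ α * h t) ≠ ⊤ := by
    have := aux_fin α η k hα hk g hg_mono hg_nonneg hg_int
    rwa [setLIntegral_congr_fun measurableSet_Ioo
      (g := fun t => ENNReal.ofReal (t ^ α * g (k * t ^ (α - 1))))
      (fun t ht => by simp only [hh t ht.1])]
  have hone := aux_one α η hη hα h hm hanti hpos hfin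
  obtain ⟨C, hC, hF⟩ := aux_fubini n iN α η hα
  have hlim := ENNReal.Tendsto.const_mul (a := C) hone (Or.inr hC)
  rw [mul_zero] at hlim
  refine tendsto_of_tendsto_of_tendsto_of_le_of_le tendsto_const_nhds hlim
    (fun _ => zero_le) ?_
  intro s
  have hFs := hF s (fun t => t ^ α * h t) (fun t ht =>
    mul_nonneg (Real.rpow_nonneg ht.1.le _) (hpos t ht.1))
  simp only
  rw [mul_left_comm]
  refine mul_le_mul_right (le_trans ?_ hFs) _
  refine (lintegral_mono_set (t := {y : EuclideanSpace ℝ (Fin (n + 1)) | y iN ∈ Ioo 0 η})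
    (fun y hy => hy.2)).trans ?_
  refine setLIntegral_mono' (measurableSet_Ioo.preimage (by fun_prop)) fun y hy => ?_
  simp only
  rw [hh _ hy.1]
  exact le_of_eq (by congr 1; ring)
end
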